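/- Let a ≤ b be real numbers and n ≥ 1 an odd natural number. Then the n-th interval power P_n(a,b) equals the closed interval [ min{a^n, a·b^(n-1)}, max{b^n, a^(n-1)·b} ]. -/

import Mathlib

/-!
The set `intervalPow a b n` is the image of the connected cube `[a,b]ⁿ` under the continuous map
`x ↦ ∏ xᵢ`, hence order-connected (`intervalPow_ordConnected`). All four candidates `aⁿ`, `abⁿ⁻¹`,
`bⁿ`, `aⁿ⁻¹b` are attained, so the closed interval is contained in it.

For the other inclusion it suffices to bound products from above (`prod_le_max_of_odd`): as `n` is
odd, `x ↦ -x` swaps `[a,b]` with `[-b,-a]` and turns the lower bound into the upper one. The upper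
bound depends on the sign of `b` and on which endpoint has the larger absolute value; when `a`
dominates and `b ≥ 0`, a positive product of an odd number of factors has a nonnegative factor,
which is at most `b`, while the other factors have absolute value at most `|a|`.
-/

/-- The n-th interval power P_n(a,b): the set of all products of n elements of [a,b]. -/
def intervalPow (a b : ℝ) (n : ℕ) : Set ℝ :=
  {p : ℝ | ∃ x : Fin n → ℝ, (∀ i, x i ∈ Set.Icc a b) ∧ ∏ i, x i = p}

theorem intervalPow_ordConnected (a b : ℝ) (n : ℕ) : (intervalPow a b n).OrdConnected := by
  have himage : intervalPow a b n =
      (fun x : Fin n → ℝ => ∏ i, x i) '' Set.univ.pi (fun _ => Set.Icc a b) := by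
    ext p
    simp only [intervalPow, Set.mem_ofPred_eq, Set.mem_image, Set.mem_univ_pi]
  rw [himage]
  refine IsPreconnected.ordConnected (IsPreconnected.image ?_ _ ?_)
  · exact isPreconnected_univ_pi fun _ => isPreconnected_Icc
  · exact Continuous.continuousOn (by fun_prop)

theorem prod_eq_neg_prod_neg_of_odd {n : ℕ} (hodd : Odd n) (x : Fin n → ℝ) :
    ∏ i, x i = -∏ i, -x i := by
  rw [Finset.prod_neg, Finset.card_univ, Fintype.card_fin, hodd.neg_one_pow]
  ring

/-- A product of `n` factors one of which lies in `[0,b]` is at most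
`b * Mⁿ⁻¹`, for any bound `M` on the absolute values of the factors. -/
theorem prod_le_mul_pow_of_nonneg {n : ℕ} {b M : ℝ} {x : Fin n → ℝ} (hM : ∀ i, |x i| ≤ M)
    {j : Fin n} (hj : 0 ≤ x j) (hjb : x j ≤ b) : ∏ i, x i ≤ b * M ^ (n - 1) := by
  have hrest : ∏ i ∈ Finset.univ.erase j, |x i| ≤ M ^ (n - 1) := by
    calc ∏ i ∈ Finset.univ.erase j, |x i| ≤ ∏ _i ∈ Finset.univ.erase j, M :=
          Finset.prod_le_prod (fun i _ => abs_nonneg _) fun i _ => hM i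
      _ = M ^ (n - 1) := by simp
  calc ∏ i, x i ≤ |∏ i, x i| := le_abs_self _
    _ = |x j| * ∏ i ∈ Finset.univ.erase j, |x i| := by
        rw [Finset.abs_prod, Finset.mul_prod_erase _ (fun i => |x i|) (Finset.mem_univ j)]
    _ ≤ b * M ^ (n - 1) := by
        rw [abs_of_nonneg hj]
        exact mul_le_mul hjb hrest (Finset.prod_nonneg fun i _ => abs_nonneg _) (hj.trans hjb)

theorem prod_le_max_of_odd {a b : ℝ} {n : ℕ} (hodd : Odd n) {x : Fin n → ℝ}
    (hx : ∀ i, x i ∈ Set.Icc a b) : ∏ i, x i ≤ max (b ^ n) (a ^ (n - 1) * b) := by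
  have heven : Even (n - 1) := hodd.tsub_odd odd_one
  rcases le_total b 0 with hb | hb
  · refine le_max_of_le_left ?_
    have h : ∏ _i : Fin n, -b ≤ ∏ i, -x i :=
      Finset.prod_le_prod (fun i _ => by linarith) fun i _ => by linarith [(hx i).2]
    rw [Finset.prod_const, Finset.card_univ, Fintype.card_fin, hodd.neg_pow] at h
    rw [prod_eq_neg_prod_neg_of_odd hodd]
    linarith
  rcases le_total 0 (a + b) with hs | hs
  · refine le_max_of_le_left ?_
    calc ∏ i, x i ≤ |∏ i, x i| := le_abs_self _
      _ = ∏ i, |x i| := Finset.abs_prod _ _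
      _ ≤ ∏ _i : Fin n, b := Finset.prod_le_prod (fun i _ => abs_nonneg _) fun i _ =>
          abs_le.2 ⟨by linarith [(hx i).1], (hx i).2⟩
      _ = b ^ n := by simp
  · refine le_max_of_le_right ?_
    by_cases hex : ∃ j, 0 ≤ x j
    · obtain ⟨j, hj⟩ := hex
      have h := prod_le_mul_pow_of_nonneg (M := -a)
        (fun i => abs_le.2 ⟨by linarith [(hx i).1], by linarith [(hx i).2]⟩) hj (hx j).2
      rwa [heven.neg_pow, mul_comm] at h
    · push Not at hex
      have hneg : 0 ≤ ∏ i, -x i := Finset.prod_nonneg fun i _ => by linarith [hex i]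
      rw [prod_eq_neg_prod_neg_of_odd hodd]
      linarith [mul_nonneg (heven.pow_nonneg a) hb]

theorem min_le_prod_of_odd {a b : ℝ} {n : ℕ} (hodd : Odd n) {x : Fin n → ℝ}
    (hx : ∀ i, x i ∈ Set.Icc a b) : min (a ^ n) (a * b ^ (n - 1)) ≤ ∏ i, x i := by
  have heven : Even (n - 1) := hodd.tsub_odd odd_one
  have h := prod_le_max_of_odd (a := -b) (b := -a) hodd (x := fun i => -x i)
    fun i => ⟨neg_le_neg (hx i).2, neg_le_neg (hx i).1⟩
  rw [hodd.neg_pow, heven.neg_pow, mul_neg, max_neg_neg, mul_comm] at h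
  rw [prod_eq_neg_prod_neg_of_odd hodd]
  linarith

theorem mul_pow_mem_intervalPow {a b c d : ℝ} (hc : c ∈ Set.Icc a b) (hd : d ∈ Set.Icc a b)
    {n : ℕ} (hn : 1 ≤ n) : c * d ^ (n - 1) ∈ intervalPow a b n := by
  obtain ⟨m, rfl⟩ := Nat.exists_eq_add_of_le' hn
  refine ⟨Fin.cons c fun _ => d, fun i => ?_, by simp [Fin.prod_univ_succ]⟩
  refine Fin.cases ?_ (fun k => ?_) i
  · simpa using hc
  · simpa using hd

/-- for a ≤ b and n ≥ 1 odd,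
P_n(a,b) = [min{aⁿ, a·bⁿ⁻¹}, max{bⁿ, aⁿ⁻¹·b}]. -/
theorem intervalPow_odd (a b : ℝ) (hab : a ≤ b)
    (n : ℕ) (hn : 1 ≤ n) (hodd : Odd n) :
    intervalPow a b n =
      Set.Icc (min (a ^ n) (a * b ^ (n - 1))) (max (b ^ n) (a ^ (n - 1) * b)) := by
  have ha : a ∈ Set.Icc a b := Set.left_mem_Icc.2 hab
  have hb : b ∈ Set.Icc a b := Set.right_mem_Icc.2 hab
  apply Set.Subset.antisymm
  · rintro _ ⟨x, hx, rfl⟩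
    exact ⟨min_le_prod_of_odd hodd hx, prod_le_max_of_odd hodd hx⟩
  · have hn0 : n ≠ 0 := by omega
    refine (intervalPow_ordConnected a b n).out ?_ ?_
    · rcases min_choice (a ^ n) (a * b ^ (n - 1)) with h | h <;> rw [h]
      · rw [← mul_pow_sub_one hn0 a]
        exact mul_pow_mem_intervalPow ha ha hn
      · exact mul_pow_mem_intervalPow ha hb hn
    · rcases max_choice (b ^ n) (a ^ (n - 1) * b) with h | h <;> rw [h]
      · rw [← mul_pow_sub_one hn0 b]
        exact mul_pow_mem_intervalPow hb hb hn
      · rw [mul_comm]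
        exact mul_pow_mem_intervalPow hb ha hn
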